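/- Let 0<α<1 and let f,g be Schwartz functions on ℝ. Then for every ξ∈ℝ, D^α f·g(ξ) = C_α ∫₀^∞ [f(ξ) g(ξ−y) − f(ξ−y) g(ξ)] / y^{1+α} dy, where C_α = α/Γ(1−α) = −1/Γ(−α). -/

import Mathlib

/-!
Fourier inversion gives `f(ξ) − f(ξ−y) = (2π)⁻¹ ∫ f̂(k) e^{ikξ} (1 − e^{−iky}) dk`. Divide by
`y^{1+α}` and integrate over `y > 0`: since `∫₀^∞ |1 − e^{−iky}| y^{−1−α} dy` is at most a constant
times `|k|^α`, Fubini applies as soon as `(ik)^α f̂` is integrable, and the inner integral is given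
by `∫₀^∞ (1 − e^{−sy}) y^{−1−α} dy = s^α Γ(1−α)/α` at `s = ik`. The result is the Marchaud formula
`D^α f(ξ) = C_α ∫₀^∞ (f(ξ) − f(ξ−y)) y^{−1−α} dy`; in `D^α f·g` the terms `f(ξ) g(ξ)` cancel.

The left side `F(s)` of the integral identity has `F'(s) = ∫₀^∞ y^{−α} e^{−sy} dy`, a Gamma integral
when `s` is real, so integrating from `F(0) = 0` settles `s ≥ 0`. The identity theorem extends
the result to `Re s > 0`, and continuity to `Re s ≥ 0`.
-/

open MeasureTheory

noncomputable section

/-- Fourier transform with convention `f̂(k) = ∫ f(ξ) e^{-ikξ} dξ`. -/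
def FT (f : ℝ → ℂ) (k : ℝ) : ℂ :=
  ∫ ξ : ℝ, f ξ * Complex.exp (-(Complex.I * (k : ℂ) * (ξ : ℂ)))

/-- Spectral fractional derivative `D^α f`, defined via Fourier inversion so that
`F[D^α f](k) = (ik)^α f̂(k)` with the principal branch. -/
def fracDeriv (α : ℝ) (f : ℝ → ℂ) (ξ : ℝ) : ℂ :=
  ((2 * Real.pi : ℝ) : ℂ)⁻¹ *
    ∫ k : ℝ, (Complex.I * (k : ℂ)) ^ (α : ℂ) * FT f k * Complex.exp (Complex.I * (k : ℂ) * (ξ : ℂ))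

/-- Spectral fractional Hirota bilinear operator `D^α f·g := (D^α f) g − f (D^α g)`. -/
def hirotaFrac (α : ℝ) (f g : ℝ → ℂ) (ξ : ℝ) : ℂ :=
  fracDeriv α f ξ * g ξ - f ξ * fracDeriv α g ξ

section Marchaud

open Set Filter Topology
open Complex (I)
open scoped FourierTransform

variable {α : ℝ}

theorem norm_one_sub_exp_neg_le {z : ℂ} (hz : 0 ≤ z.re) :
    ‖1 - Complex.exp (-z)‖ ≤ 2 * min 1 ‖z‖ := by
  rcases le_total ‖z‖ 1 with h | h
  · rw [min_eq_right h, norm_sub_rev, ← norm_neg z]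
    exact Complex.norm_exp_sub_one_le (by rwa [norm_neg])
  · have h_exp : ‖Complex.exp (-z)‖ ≤ 1 := by
      rw [Complex.norm_exp, Complex.neg_re]
      exact Real.exp_le_one_iff.2 (neg_nonpos.2 hz)
    calc ‖1 - Complex.exp (-z)‖ ≤ ‖(1 : ℂ)‖ + ‖Complex.exp (-z)‖ := norm_sub_le _ _
      _ ≤ 2 * min 1 ‖z‖ := by rw [min_eq_left h, norm_one]; linarith

/-- The majorant `min(1, cy) / y^{1+α}` of the Marchaud kernel at frequencies of modulus at
most `c`. -/
def marchaudMajorant (α c y : ℝ) : ℝ := min 1 (c * y) / y ^ (1 + α)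

theorem integrableOn_marchaudMajorant (hα0 : 0 < α) (hα1 : α < 1) {c : ℝ} (hc : 0 ≤ c) :
    IntegrableOn (marchaudMajorant α c) (Ioi 0) := by
  have h_meas : Measurable (marchaudMajorant α c) := by
    unfold marchaudMajorant
    fun_prop
  have h_norm : ∀ y : ℝ, 0 < y → ‖marchaudMajorant α c y‖ = min 1 (c * y) / y ^ (1 + α) :=
    fun y hy => Real.norm_of_nonneg (div_nonneg (by positivity) (by positivity))
  rw [← Ioc_union_Ioi_eq_Ioi (zero_le_one' ℝ)]
  refine IntegrableOn.union ?near_zero ?near_infty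
  case near_zero =>
    have h_int : IntegrableOn (fun y : ℝ => c * y ^ (-α)) (Ioc 0 1) := by
      rw [← intervalIntegrable_iff_integrableOn_Ioc_of_le zero_le_one]
      exact (intervalIntegral.intervalIntegrable_rpow' (by linarith)).const_mul c
    refine h_int.mono' h_meas.aestronglyMeasurable ?_
    filter_upwards [ae_restrict_mem measurableSet_Ioc] with y hy
    calc ‖marchaudMajorant α c y‖ ≤ c * y / y ^ (1 + α) := by
          have := hy.1
          rw [h_norm y hy.1]
          gcongr
          exact min_le_right _ _
      _ = c * y ^ (-α) := by
          rw [mul_div_assoc, ← Real.rpow_one_sub' hy.1.le (by linarith)]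
          ring_nf
  case near_infty =>
    refine (integrableOn_Ioi_rpow_of_lt (a := -(1 + α)) (by linarith) one_pos).mono'
      h_meas.aestronglyMeasurable ?_
    filter_upwards [ae_restrict_mem measurableSet_Ioi] with y hy
    have hy0 : 0 < y := one_pos.trans hy
    rw [h_norm y hy0, Real.rpow_neg hy0.le, ← one_div]
    gcongr
    exact min_le_left _ _

theorem integral_marchaudMajorant (hα : α ≠ 0) {c : ℝ} (hc : 0 ≤ c) :
    ∫ y in Ioi 0, marchaudMajorant α c y = c ^ α * ∫ y in Ioi 0, marchaudMajorant α 1 y := by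
  rcases hc.eq_or_lt with rfl | hc
  · simp [marchaudMajorant, Real.zero_rpow hα]
  have h_scale : ∀ y ∈ Ioi (0 : ℝ),
      marchaudMajorant α c y = c ^ (1 + α) * marchaudMajorant α 1 (c * y) := fun y hy => by
    have : c ^ (1 + α) ≠ 0 := (Real.rpow_pos_of_pos hc _).ne'
    rw [marchaudMajorant, marchaudMajorant, Real.mul_rpow hc.le (le_of_lt hy), one_mul]
    field_simp
  rw [setIntegral_congr_fun measurableSet_Ioi h_scale, integral_const_mul,
    integral_comp_mul_left_Ioi _ _ hc, mul_zero, smul_eq_mul, Real.rpow_add hc,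
    Real.rpow_one]
  field_simp

/-- The Marchaud kernel `(1 − e^{−sy}) / y^{1+α}` with complex frequency `s`; its integral over
`y > 0` is a multiple of the Fourier multiplier `s ^ α`. -/
def marchaudKernel (α : ℝ) (s : ℂ) (y : ℝ) : ℂ :=
  (1 - Complex.exp (-(s * y))) / ((y ^ (1 + α) : ℝ) : ℂ)

theorem measurable_marchaudKernel (α : ℝ) (s : ℂ) : Measurable (marchaudKernel α s) := by
  unfold marchaudKernel
  fun_prop

theorem norm_marchaudKernel_le {s : ℂ} (hs : 0 ≤ s.re) {c : ℝ} (hsc : ‖s‖ ≤ c) {y : ℝ}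
    (hy : 0 < y) : ‖marchaudKernel α s y‖ ≤ 2 * marchaudMajorant α c y := by
  have h_re : 0 ≤ (s * y).re := by
    rw [Complex.re_mul_ofReal]
    positivity
  have h_norm : ‖s * y‖ ≤ c * y := by
    rw [norm_mul, Complex.norm_of_nonneg hy.le]
    gcongr
  rw [marchaudKernel, marchaudMajorant, norm_div, Complex.norm_of_nonneg (by positivity),
    ← mul_div_assoc]
  gcongr
  exact (norm_one_sub_exp_neg_le h_re).trans (by gcongr)

theorem integrableOn_marchaudKernel (hα0 : 0 < α) (hα1 : α < 1) {s : ℂ} (hs : 0 ≤ s.re) :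
    IntegrableOn (marchaudKernel α s) (Ioi 0) := by
  refine ((integrableOn_marchaudMajorant hα0 hα1 (norm_nonneg s)).const_mul 2).mono'
    (measurable_marchaudKernel α s).aestronglyMeasurable ?_
  filter_upwards [ae_restrict_mem measurableSet_Ioi] with y hy
  exact norm_marchaudKernel_le hs le_rfl hy

theorem integral_norm_marchaudKernel_le (hα0 : 0 < α) (hα1 : α < 1) {s : ℂ} (hs : 0 ≤ s.re) :
    ∫ y in Ioi 0, ‖marchaudKernel α s y‖
      ≤ ‖s‖ ^ α * (2 * ∫ y in Ioi 0, marchaudMajorant α 1 y) := by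
  calc ∫ y in Ioi 0, ‖marchaudKernel α s y‖
      ≤ ∫ y in Ioi 0, 2 * marchaudMajorant α ‖s‖ y :=
        setIntegral_mono_on (integrableOn_marchaudKernel hα0 hα1 hs).norm
          ((integrableOn_marchaudMajorant hα0 hα1 (norm_nonneg s)).const_mul 2) measurableSet_Ioi
          fun _ hy => norm_marchaudKernel_le hs le_rfl hy
    _ = ‖s‖ ^ α * (2 * ∫ y in Ioi 0, marchaudMajorant α 1 y) := by
        rw [integral_const_mul, integral_marchaudMajorant hα0.ne' (norm_nonneg s)]
        ring

theorem continuousOn_integral_marchaudKernel (hα0 : 0 < α) (hα1 : α < 1) :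
    ContinuousOn (fun s => ∫ y in Ioi 0, marchaudKernel α s y) {s | 0 ≤ s.re} := by
  intro s₀ _
  have hc : 0 ≤ ‖s₀‖ + 1 := by positivity
  refine continuousWithinAt_of_dominated
    (.of_forall fun s => (measurable_marchaudKernel α s).aestronglyMeasurable) ?_
    ((integrableOn_marchaudMajorant hα0 hα1 hc).const_mul 2) (.of_forall fun y => ?_)
  · have h_near : ∀ᶠ s : ℂ in 𝓝 s₀, ‖s‖ ≤ ‖s₀‖ + 1 :=
      (continuous_norm.tendsto s₀).eventually_le_const (lt_add_one _)
    filter_upwards [self_mem_nhdsWithin, nhdsWithin_le_nhds h_near] with s hs hsc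
    filter_upwards [ae_restrict_mem measurableSet_Ioi] with y hy
    exact norm_marchaudKernel_le hs hsc hy
  · unfold marchaudKernel
    fun_prop

theorem hasDerivAt_marchaudKernel (α : ℝ) (s : ℂ) {y : ℝ} (hy : 0 < y) :
    HasDerivAt (marchaudKernel α · y) (((y ^ (-α) : ℝ) : ℂ) * Complex.exp (-(s * y))) s := by
  have h := ((((hasDerivAt_id s).mul_const (y : ℂ)).neg.cexp).const_sub 1).div_const
    ((y ^ (1 + α) : ℝ) : ℂ)
  refine h.congr_deriv ?_
  have hy' : (y : ℂ) ≠ 0 := Complex.ofReal_ne_zero.2 hy.ne'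
  have hyα : ((y ^ α : ℝ) : ℂ) ≠ 0 := Complex.ofReal_ne_zero.2 (Real.rpow_pos_of_pos hy α).ne'
  rw [Real.rpow_add hy, Real.rpow_one, Real.rpow_neg hy.le, Complex.ofReal_mul, Complex.ofReal_inv]
  simp only [id_eq, Pi.neg_apply]
  field_simp

theorem hasDerivAt_integral_marchaudKernel (hα0 : 0 < α) (hα1 : α < 1) {s : ℂ} (hs : 0 < s.re) :
    HasDerivAt (fun s => ∫ y in Ioi 0, marchaudKernel α s y)
      (∫ y in Ioi (0 : ℝ), ((y ^ (-α) : ℝ) : ℂ) * Complex.exp (-(s * y))) s := by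
  have h_nhds : {z : ℂ | s.re / 2 < z.re} ∈ 𝓝 s :=
    (isOpen_lt continuous_const Complex.continuous_re).mem_nhds (half_lt_self hs)
  have h_bound : IntegrableOn (fun y : ℝ => y ^ (-α) * Real.exp (-(s.re / 2) * y)) (Ioi 0) := by
    simpa only [Real.rpow_one] using integrableOn_rpow_mul_exp_neg_mul_rpow (p := 1) (s := -α)
      (by linarith) one_pos (half_pos hs)
  refine (hasDerivAt_integral_of_dominated_loc_of_deriv_le h_nhds
    (F' := fun z y => ((y ^ (-α) : ℝ) : ℂ) * Complex.exp (-(z * y)))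
    (.of_forall fun z => (measurable_marchaudKernel α z).aestronglyMeasurable)
    (integrableOn_marchaudKernel hα0 hα1 hs.le)
    (Measurable.aestronglyMeasurable (by fun_prop)) ?_ h_bound ?_).2
  · filter_upwards [ae_restrict_mem measurableSet_Ioi] with y hy z hz
    have hy0 : 0 < y := hy
    rw [norm_mul, Complex.norm_of_nonneg (by positivity), Complex.norm_exp, Complex.neg_re,
      Complex.re_mul_ofReal, ← neg_mul]
    gcongr
  · filter_upwards [ae_restrict_mem measurableSet_Ioi] with y hy z _
    exact hasDerivAt_marchaudKernel α z hy

theorem integral_rpow_neg_mul_cexp_neg_mul (hα1 : α < 1) {r : ℝ} (hr : 0 < r) :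
    ∫ y in Ioi (0 : ℝ), ((y ^ (-α) : ℝ) : ℂ) * Complex.exp (-(r * y))
      = ((r ^ (α - 1) * Real.Gamma (1 - α) : ℝ) : ℂ) := by
  have h_Gamma := Real.integral_rpow_mul_exp_neg_mul_Ioi (sub_pos.2 hα1) hr
  rw [sub_sub_cancel_left, one_div, Real.inv_rpow hr.le, ← Real.rpow_neg hr.le, neg_sub] at h_Gamma
  rw [← h_Gamma, ← integral_complex_ofReal]
  push_cast
  rfl

theorem integral_marchaudKernel_ofReal (hα0 : 0 < α) (hα1 : α < 1) {r : ℝ} (hr : 0 ≤ r) :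
    ∫ y in Ioi 0, marchaudKernel α r y
      = (r : ℂ) ^ (α : ℂ) * ((Real.Gamma (1 - α) / α : ℝ) : ℂ) := by
  have h_cont : ContinuousOn (fun t : ℝ => ∫ y in Ioi 0, marchaudKernel α t y) (Icc 0 r) :=
    (continuousOn_integral_marchaudKernel hα0 hα1).comp Complex.continuous_ofReal.continuousOn
      fun _ ht => ht.1
  have h_deriv : ∀ t ∈ Ioo 0 r, HasDerivAt (fun t : ℝ => ∫ y in Ioi 0, marchaudKernel α t y)
      ((t ^ (α - 1) * Real.Gamma (1 - α) : ℝ) : ℂ) t := fun t ht => by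
    rw [← integral_rpow_neg_mul_cexp_neg_mul hα1 ht.1]
    exact (hasDerivAt_integral_marchaudKernel hα0 hα1 ht.1).comp_ofReal
  have h_int : IntervalIntegrable (fun t => ((t ^ (α - 1) * Real.Gamma (1 - α) : ℝ) : ℂ))
      volume 0 r := by
    have h := (intervalIntegral.intervalIntegrable_rpow' (a := 0) (b := r)
      (by linarith : -1 < α - 1)).mul_const (Real.Gamma (1 - α))
    exact ⟨h.1.ofReal, h.2.ofReal⟩
  have h_zero : ∫ y in Ioi 0, marchaudKernel α (0 : ℝ) y = 0 := by simp [marchaudKernel]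
  have h_FTC := intervalIntegral.integral_eq_sub_of_hasDerivAt_of_le hr h_cont h_deriv h_int
  rw [h_zero, sub_zero] at h_FTC
  rw [← h_FTC, intervalIntegral.integral_ofReal, intervalIntegral.integral_mul_const,
    integral_rpow (.inl (by linarith)), sub_add_cancel, Real.zero_rpow hα0.ne',
    ← Complex.ofReal_cpow hr, ← Complex.ofReal_mul]
  congr 1
  ring

theorem integral_marchaudKernel_of_re_pos (hα0 : 0 < α) (hα1 : α < 1) {s : ℂ} (hs : 0 < s.re) :
    ∫ y in Ioi 0, marchaudKernel α s y
      = s ^ (α : ℂ) * ((Real.Gamma (1 - α) / α : ℝ) : ℂ) := by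
  have h_open : IsOpen {z : ℂ | 0 < z.re} := isOpen_lt continuous_const Complex.continuous_re
  have h_left : AnalyticOnNhd ℂ (fun s => ∫ y in Ioi 0, marchaudKernel α s y) {z | 0 < z.re} :=
    DifferentiableOn.analyticOnNhd (fun z hz => (hasDerivAt_integral_marchaudKernel hα0 hα1
      hz).differentiableAt.differentiableWithinAt) h_open
  have h_right : AnalyticOnNhd ℂ
      (fun s => s ^ (α : ℂ) * ((Real.Gamma (1 - α) / α : ℝ) : ℂ)) {z | 0 < z.re} :=
    DifferentiableOn.analyticOnNhd (fun z hz =>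
      ((differentiableAt_id.cpow_const (.inl hz)).mul_const _).differentiableWithinAt) h_open
  have h_ofReal : Tendsto ((↑) : ℝ → ℂ) (𝓝[≠] 1) (𝓝[≠] (1 : ℝ)) :=
    Complex.continuous_ofReal.continuousWithinAt.tendsto_nhdsWithin fun t ht =>
      Complex.ofReal_injective.ne ht
  have h_near_one : ∀ᶠ t : ℝ in 𝓝[≠] 1, 0 < t := nhdsWithin_le_nhds (lt_mem_nhds one_pos)
  exact h_left.eqOn_of_preconnected_of_frequently_eq h_right
    (convex_halfSpace_re_gt 0).isPreconnected (z₀ := ((1 : ℝ) : ℂ)) (by simp)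
    (h_ofReal.frequently (h_near_one.mono fun t ht =>
      integral_marchaudKernel_ofReal hα0 hα1 ht.le).frequently) hs

theorem integral_marchaudKernel (hα0 : 0 < α) (hα1 : α < 1) {s : ℂ} (hs : 0 ≤ s.re) :
    ∫ y in Ioi 0, marchaudKernel α s y
      = s ^ (α : ℂ) * ((Real.Gamma (1 - α) / α : ℝ) : ℂ) := by
  have h_cpow : ContinuousOn (fun s : ℂ => s ^ (α : ℂ) * ((Real.Gamma (1 - α) / α : ℝ) : ℂ))
      {s | 0 ≤ s.re} := fun z hz =>
    ((Complex.continuousAt_cpow_const_of_re_pos (.inl hz) hα0).mul_const _).continuousWithinAt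
  exact EqOn.of_subset_closure (s := {s : ℂ | 0 < s.re})
    (fun _ hz => integral_marchaudKernel_of_re_pos hα0 hα1 hz)
    (continuousOn_integral_marchaudKernel hα0 hα1) h_cpow (fun z (hz : 0 < z.re) => hz.le)
    (Complex.closure_setOfPred_lt_re 0).ge hs

theorem integrable_prod_mul_marchaudKernel (hα0 : 0 < α) (hα1 : α < 1) {φ : ℝ → ℂ}
    (hφ : AEStronglyMeasurable φ) (hφα : Integrable fun k : ℝ => (I * k) ^ (α : ℂ) * φ k) :
    Integrable (Function.uncurry fun k y : ℝ => φ k * marchaudKernel α (I * k) y)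
      (volume.prod (volume.restrict (Ioi 0))) := by
  have h_re : ∀ k : ℝ, 0 ≤ (I * k).re := fun k => by simp
  have h_meas : AEStronglyMeasurable
      (Function.uncurry fun k y : ℝ => φ k * marchaudKernel α (I * k) y)
      (volume.prod (volume.restrict (Ioi 0))) := by
    refine hφ.comp_fst.mul (Measurable.aestronglyMeasurable ?_)
    unfold marchaudKernel
    fun_prop
  refine (integrable_prod_iff h_meas).2
    ⟨.of_forall fun k => (integrableOn_marchaudKernel hα0 hα1 (h_re k)).const_mul (φ k), ?_⟩
  refine (hφα.norm.mul_const (2 * ∫ y in Ioi 0, marchaudMajorant α 1 y)).mono'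
    h_meas.norm.integral_prod_right' (.of_forall fun k => ?_)
  simp only [Function.uncurry_apply_pair, norm_mul (φ k)]
  rw [integral_const_mul,
    Real.norm_of_nonneg (mul_nonneg (norm_nonneg _) (integral_nonneg fun _ => norm_nonneg _)),
    norm_mul, Complex.norm_cpow_real, mul_comm (_ ^ α), mul_assoc]
  gcongr
  exact integral_norm_marchaudKernel_le hα0 hα1 (h_re k)

theorem integral_integral_mul_marchaudKernel (hα0 : 0 < α) (hα1 : α < 1) {φ : ℝ → ℂ}
    (hφ : AEStronglyMeasurable φ) (hφα : Integrable fun k : ℝ => (I * k) ^ (α : ℂ) * φ k) :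
    ∫ y in Ioi (0 : ℝ), ∫ k : ℝ, φ k * marchaudKernel α (I * k) y
      = ((Real.Gamma (1 - α) / α : ℝ) : ℂ) * ∫ k : ℝ, (I * k) ^ (α : ℂ) * φ k := by
  rw [← integral_integral_swap (integrable_prod_mul_marchaudKernel hα0 hα1 hφ hφα),
    ← integral_const_mul]
  congr 1 with k
  rw [integral_const_mul, integral_marchaudKernel hα0 hα1 (by simp)]
  ring

theorem FT_eq_fourier (f : ℝ → ℂ) (k : ℝ) : FT f k = 𝓕 f (k / (2 * Real.pi)) := by
  have hπ : (Real.pi : ℂ) ≠ 0 := Complex.ofReal_ne_zero.2 Real.pi_ne_zero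
  rw [Real.fourier_real_eq_integral_exp_smul, FT]
  congr 1 with x
  rw [smul_eq_mul, mul_comm]
  congr 2
  push_cast
  field_simp

theorem fourier_eq_FT (f : ℝ → ℂ) (v : ℝ) : 𝓕 f v = FT f (2 * Real.pi * v) := by
  rw [FT_eq_fourier, mul_div_cancel_left₀ v (by positivity)]

theorem FT_inversion {f : ℝ → ℂ} (hf_cont : Continuous f) (hf : Integrable f)
    (hFT : Integrable (FT f)) (x : ℝ) :
    ((2 * Real.pi : ℝ) : ℂ)⁻¹ * ∫ k : ℝ, FT f k * Complex.exp (I * k * x) = f x := by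
  have h_fourier : Integrable (𝓕 f) := by
    rw [funext (fourier_eq_FT f)]
    exact hFT.comp_mul_left' (by positivity)
  have h_scale := Measure.integral_comp_mul_left
    (fun k : ℝ => FT f k * Complex.exp (I * k * x)) (2 * Real.pi)
  rw [abs_of_pos (by positivity), Complex.real_smul, Complex.ofReal_inv] at h_scale
  rw [← h_scale, ← congrFun (hf_cont.fourierInv_fourier_eq hf h_fourier) x, Real.fourierInv_eq']
  congr 1 with v
  rw [fourier_eq_FT, smul_eq_mul, mul_comm, Real.inner_apply]
  congr 2
  push_cast
  ring

/-- The functions for which `D^α f` is defined by an absolutely convergent integral and Fourier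
inversion recovers `f` everywhere. -/
structure FracDifferentiable (α : ℝ) (f : ℝ → ℂ) : Prop where
  continuous : Continuous f
  integrable : Integrable f
  integrable_FT : Integrable (FT f)
  integrable_symbol_mul_FT : Integrable fun k : ℝ => (I * k) ^ (α : ℂ) * FT f k

theorem integrable_mul_exp_I_mul {φ : ℝ → ℂ} (hφ : Integrable φ) (x : ℝ) :
    Integrable fun k : ℝ => φ k * Complex.exp (I * k * x) := by
  refine hφ.mul_bdd (c := 1) (by fun_prop) (.of_forall fun k => ?_)
  rw [mul_assoc, ← Complex.ofReal_mul, Complex.norm_exp_I_mul_ofReal]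

namespace FracDifferentiable

variable {f : ℝ → ℂ}

theorem integral_FT_mul_marchaudKernel (hf : FracDifferentiable α f) (ξ y : ℝ) :
    ∫ k : ℝ, FT f k * Complex.exp (I * k * ξ) * marchaudKernel α (I * k) y
      = ((2 * Real.pi : ℝ) : ℂ) * ((f ξ - f (ξ - y)) / ((y ^ (1 + α) : ℝ) : ℂ)) := by
  have h_inv : ∀ x : ℝ,
      ∫ k : ℝ, FT f k * Complex.exp (I * k * x) = ((2 * Real.pi : ℝ) : ℂ) * f x := fun x => by
    rw [← FT_inversion hf.continuous hf.integrable hf.integrable_FT x,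
      mul_inv_cancel_left₀ (Complex.ofReal_ne_zero.2 (by positivity))]
  rw [← mul_div_assoc, mul_sub, ← h_inv, ← h_inv,
    ← integral_sub (integrable_mul_exp_I_mul hf.integrable_FT _)
      (integrable_mul_exp_I_mul hf.integrable_FT _), ← integral_div]
  congr 1 with k
  have h_shift : Complex.exp (I * k * ((ξ - y : ℝ) : ℂ))
      = Complex.exp (I * k * ξ) * Complex.exp (-(I * k * y)) := by
    rw [← Complex.exp_add]
    push_cast
    ring_nf
  rw [marchaudKernel, h_shift]
  ring

theorem aestronglyMeasurable_FT_mul_exp (hf : FracDifferentiable α f) (ξ : ℝ) :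
    AEStronglyMeasurable fun k : ℝ => FT f k * Complex.exp (I * k * ξ) :=
  (integrable_mul_exp_I_mul hf.integrable_FT ξ).aestronglyMeasurable

theorem integrable_symbol_mul_FT_mul_exp (hf : FracDifferentiable α f) (ξ : ℝ) :
    Integrable fun k : ℝ => (I * k) ^ (α : ℂ) * (FT f k * Complex.exp (I * k * ξ)) := by
  simpa only [mul_assoc] using integrable_mul_exp_I_mul hf.integrable_symbol_mul_FT ξ

theorem integrableOn_marchaud (hf : FracDifferentiable α f) (hα0 : 0 < α) (hα1 : α < 1) (ξ : ℝ) :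
    IntegrableOn (fun y : ℝ => (f ξ - f (ξ - y)) / ((y ^ (1 + α) : ℝ) : ℂ)) (Ioi 0) := by
  have h := (integrable_prod_mul_marchaudKernel hα0 hα1 (hf.aestronglyMeasurable_FT_mul_exp ξ)
    (hf.integrable_symbol_mul_FT_mul_exp ξ)).integral_prod_right
  simp only [Function.uncurry_apply_pair, hf.integral_FT_mul_marchaudKernel] at h
  have hπ : ((2 * Real.pi : ℝ) : ℂ) ≠ 0 := Complex.ofReal_ne_zero.2 (by positivity)
  exact (integrable_const_mul_iff hπ.isUnit _).1 h

theorem fracDeriv_eq_marchaud (hf : FracDifferentiable α f) (hα0 : 0 < α) (hα1 : α < 1) (ξ : ℝ) :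
    fracDeriv α f ξ = ((α / Real.Gamma (1 - α) : ℝ) : ℂ) *
      ∫ y in Ioi (0 : ℝ), (f ξ - f (ξ - y)) / ((y ^ (1 + α) : ℝ) : ℂ) := by
  have h := integral_integral_mul_marchaudKernel hα0 hα1 (hf.aestronglyMeasurable_FT_mul_exp ξ)
    (hf.integrable_symbol_mul_FT_mul_exp ξ)
  simp only [hf.integral_FT_mul_marchaudKernel, integral_const_mul, ← mul_assoc] at h
  have hπ : ((2 * Real.pi : ℝ) : ℂ) ≠ 0 := Complex.ofReal_ne_zero.2 (by positivity)
  have hΓ : ((Real.Gamma (1 - α) / α : ℝ) : ℂ) ≠ 0 :=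
    Complex.ofReal_ne_zero.2 (div_pos (Real.Gamma_pos_of_pos (by linarith)) hα0).ne'
  rw [fracDeriv, ← inv_div, Complex.ofReal_inv, inv_mul_eq_iff_eq_mul₀ hπ, mul_left_comm,
    eq_inv_mul_iff_mul_eq₀ hΓ, ← h]

end FracDifferentiable

theorem integrable_pow_mul_norm_FT_schwartzMap (f : SchwartzMap ℝ ℂ) (n : ℕ) :
    Integrable fun k : ℝ => |k| ^ n * ‖FT f k‖ := by
  have h := ((SchwartzMap.integrable_pow_mul volume (𝓕 f) n).comp_div
    Real.two_pi_pos.ne').const_mul ((2 * Real.pi) ^ n)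
  refine h.congr (.of_forall fun k => ?_)
  simp only [FT_eq_fourier, SchwartzMap.fourier_coe, Real.norm_eq_abs, abs_div,
    abs_of_pos Real.two_pi_pos, div_pow]
  field_simp

theorem integrable_FT_schwartzMap (f : SchwartzMap ℝ ℂ) : Integrable (FT f) := by
  rw [funext (FT_eq_fourier f), ← SchwartzMap.fourier_coe]
  exact (SchwartzMap.integrable _).comp_div Real.two_pi_pos.ne'

theorem rpow_le_one_add_pow_ceil {x : ℝ} (hx : 0 ≤ x) (hα : 0 ≤ α) :
    x ^ α ≤ 1 + x ^ ⌈α⌉₊ := by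
  rcases le_total x 1 with h | h
  · exact (Real.rpow_le_one hx h hα).trans (le_add_of_nonneg_right (by positivity))
  · rw [← Real.rpow_natCast]
    exact (Real.rpow_le_rpow_of_exponent_le h (Nat.le_ceil α)).trans
      (le_add_of_nonneg_left zero_le_one)

theorem fracDifferentiable_schwartzMap (hα : 0 ≤ α) (f : SchwartzMap ℝ ℂ) :
    FracDifferentiable α f where
  continuous := f.continuous
  integrable := f.integrable
  integrable_FT := integrable_FT_schwartzMap f
  integrable_symbol_mul_FT := by
    have hFT := integrable_FT_schwartzMap f
    refine (hFT.norm.add (integrable_pow_mul_norm_FT_schwartzMap f ⌈α⌉₊)).mono'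
      ((Measurable.aestronglyMeasurable (by fun_prop)).mul hFT.aestronglyMeasurable)
      (.of_forall fun k => ?_)
    calc ‖(I * k) ^ (α : ℂ) * FT f k‖ = |k| ^ α * ‖FT f k‖ := by
          rw [norm_mul, Complex.norm_cpow_real, norm_mul, Complex.norm_I, one_mul,
            Complex.norm_real, Real.norm_eq_abs]
      _ ≤ (1 + |k| ^ ⌈α⌉₊) * ‖FT f k‖ := by
          gcongr
          exact rpow_le_one_add_pow_ceil (abs_nonneg k) hα
      _ = ‖FT f k‖ + |k| ^ ⌈α⌉₊ * ‖FT f k‖ := by ring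

theorem div_Gamma_one_sub (hα : α ≠ 0) :
    α / Real.Gamma (1 - α) = -1 / Real.Gamma (-α) := by
  rw [show 1 - α = -α + 1 by ring, Real.Gamma_add_one (neg_ne_zero.2 hα), div_mul_eq_div_div,
    div_neg_self hα]

theorem stmt4_general {f g : ℝ → ℂ} (hα0 : 0 < α) (hα1 : α < 1) (hf : FracDifferentiable α f)
    (hg : FracDifferentiable α g) (ξ : ℝ) :
    (α / Real.Gamma (1 - α)) = -1 / Real.Gamma (-α) ∧
    hirotaFrac α f g ξ =
      ((α / Real.Gamma (1 - α) : ℝ) : ℂ) *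
        ∫ y in Ioi (0 : ℝ), (f ξ * g (ξ - y) - f (ξ - y) * g ξ) / ((y ^ (1 + α) : ℝ) : ℂ) := by
  refine ⟨div_Gamma_one_sub hα0.ne', ?_⟩
  rw [hirotaFrac, hf.fracDeriv_eq_marchaud hα0 hα1, hg.fracDeriv_eq_marchaud hα0 hα1, mul_assoc,
    mul_left_comm (f ξ), ← mul_sub, ← integral_mul_const, ← integral_const_mul,
    ← integral_sub ((hf.integrableOn_marchaud hα0 hα1 ξ).mul_const _)
      ((hg.integrableOn_marchaud hα0 hα1 ξ).const_mul _)]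
  congr 2 with y
  ring

end Marchaud

/-- for `0 < α < 1` and Schwartz `f, g`, the bilinear operator has the
Marchaud-type kernel representation
`D^α f·g(ξ) = C_α ∫₀^∞ (f(ξ)g(ξ−y) − f(ξ−y)g(ξ)) y^{−1−α} dy`,
with `C_α = α/Γ(1−α) = −1/Γ(−α)`. -/
theorem stmt4 (α : ℝ) (hα0 : 0 < α) (hα1 : α < 1) (f g : SchwartzMap ℝ ℂ) (ξ : ℝ) :
    (α / Real.Gamma (1 - α)) = -1 / Real.Gamma (-α) ∧
    hirotaFrac α (⇑f) (⇑g) ξ =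
      ((α / Real.Gamma (1 - α) : ℝ) : ℂ) *
        ∫ y in Set.Ioi (0 : ℝ),
          (f ξ * g (ξ - y) - f (ξ - y) * g ξ) / ((y ^ (1 + α) : ℝ) : ℂ) :=
  stmt4_general hα0 hα1 (fracDifferentiable_schwartzMap hα0.le f)
    (fracDifferentiable_schwartzMap hα0.le g) ξ
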